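/- arXiv:1404.6942 — 2 statements merged into one kernel-verified Lean document; each statement's English description precedes it below -/
import Mathlib

section
/- Let R be a simple unital associative F-algebra with an involution * and an idempotent e such that ee* = e*e = 0 and e + e* = 1, and suppose R is not finite-dimensional as a module over its center Z. Then R is generated as an F-algebra by the set (K ∩ eRe*) ∪ (K ∩ e*Re). -/
section IsSimpleRing

variable {R : Type*} [Ring R] [IsSimpleRing R]

/-- An additive subgroup of a simple ring containing `R w R` for some `w ≠ 0` is everything. -/
theorem IsSimpleRing.mem_of_mul_mul_mem {w : R} (hw : w ≠ 0) (S : AddSubgroup R)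
    (h : ∀ r s, r * w * s ∈ S) (x : R) : x ∈ S := by
  let I : TwoSidedIdeal R := TwoSidedIdeal.mk' {y | ∀ r s, r * y * s ∈ S}
    (fun r s => by simp [S.zero_mem])
    (fun hx hy r s => by rw [mul_add, add_mul]; exact S.add_mem (hx r s) (hy r s))
    (fun hx r s => by rw [mul_neg, neg_mul]; exact S.neg_mem (hx r s))
    (fun {x y} hy r s => by simpa [mul_assoc] using hy (r * x) s)
    (fun {x y} hx r s => by simpa [mul_assoc] using hx r (y * s))
  have hmem : ∀ y, y ∈ I ↔ ∀ r s, r * y * s ∈ S := fun y => by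
    simp only [I, TwoSidedIdeal.mem_mk', Set.mem_ofPred_eq]
  have hI : I = ⊤ := by
    refine (eq_bot_or_eq_top I).resolve_left fun hbot => hw ?_
    have : w ∈ I := (hmem w).2 h
    rwa [hbot, TwoSidedIdeal.mem_bot] at this
  have hx : x ∈ I := hI ▸ TwoSidedIdeal.mem_top R
  simpa using (hmem x).1 hx 1 1

/-- A simple ring is prime. -/
theorem IsSimpleRing.eq_zero_of_forall_mul_mul_eq_zero {u w : R} (hw : w ≠ 0)
    (h : ∀ r, u * r * w = 0) : u = 0 := by
  have := IsSimpleRing.mem_of_mul_mul_mem hw (AddMonoidHom.mulLeft u).ker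
    (fun r s => by
      rw [AddMonoidHom.mem_ker, AddMonoidHom.coe_mulLeft, ← mul_assoc, ← mul_assoc, h, zero_mul]) 1
  simpa using this

/-- The center of a corner `e R e` of a simple ring is `e Z`, where `Z` is the center of `R`. -/
theorem IsSimpleRing.exists_mem_center_mul_eq {e c : R} (he0 : e ≠ 0) (hec : e * c = c)
    (hce : c * e = c) (hc : ∀ r, c * (e * r * e) = (e * r * e) * c) :
    ∃ z ∈ Subring.center R, z * e = c := by
  let S : AddSubgroup R :=
    { carrier := {x | ∃ y, ∀ r, y * r * e = x * r * c}
      zero_mem' := ⟨0, by simp⟩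
      add_mem' := by
        rintro x x' ⟨y, hy⟩ ⟨y', hy'⟩
        exact ⟨y + y', fun r => by simp only [add_mul, hy, hy']⟩
      neg_mem' := by
        rintro x ⟨y, hy⟩
        exact ⟨-y, fun r => by simp only [neg_mul, hy]⟩ }
  obtain ⟨z, hz⟩ : (1 : R) ∈ S := by
    refine IsSimpleRing.mem_of_mul_mul_mem he0 S (fun p s => ⟨p * c * s, fun r => ?_⟩) 1
    calc p * c * s * r * e = p * ((c * e) * s * r * e) := by rw [hce]; noncomm_ring
      _ = p * (c * (e * (s * r) * e)) := by noncomm_ring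
      _ = p * e * s * r * (e * c) := by rw [hc]; noncomm_ring
      _ = p * e * s * r * c := by rw [hec]
  simp only [one_mul] at hz
  refine ⟨z, Subring.mem_center_iff.2 fun t => ?_, by simpa using hz 1⟩
  refine sub_eq_zero.1 (IsSimpleRing.eq_zero_of_forall_mul_mul_eq_zero he0 fun r => ?_)
  have h1 := hz (t * r)
  rw [sub_mul, sub_mul, mul_assoc t z, mul_assoc t, hz, sub_eq_zero, mul_assoc z, h1, mul_assoc]

/-- A simple ring is finite over its center as soon as `u R w` is contained in a finitely generated
submodule for some nonzero `u` and `w`. -/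
theorem IsSimpleRing.finite_center_of_mul_mul_mem {u w : R} (hu : u ≠ 0) (hw : w ≠ 0)
    {V : Submodule (Subring.center R) R} (hV : V.FG) (h : ∀ r, u * r * w ∈ V) :
    Module.Finite (Subring.center R) R := by
  let S : AddSubgroup R :=
    { carrier := {x | ∃ W : Submodule (Subring.center R) R, W.FG ∧ ∀ r, u * r * x ∈ W}
      zero_mem' := ⟨⊥, Submodule.fg_bot, by simp⟩
      add_mem' := by
        rintro x y ⟨W, hW, hx⟩ ⟨W', hW', hy⟩
        refine ⟨W ⊔ W', hW.sup hW', fun r => ?_⟩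
        rw [mul_add]
        exact Submodule.add_mem_sup (hx r) (hy r)
      neg_mem' := by
        rintro x ⟨W, hW, hx⟩
        exact ⟨W, hW, fun r => by rw [mul_neg]; exact W.neg_mem (hx r)⟩ }
  obtain ⟨W, hW, hWu⟩ : (1 : R) ∈ S := by
    refine IsSimpleRing.mem_of_mul_mul_mem hw S
      (fun p s => ⟨V.map (LinearMap.mulRight _ s), hV.map _, fun r => ?_⟩) 1
    exact ⟨u * (r * p) * w, h _, by simp [mul_assoc]⟩
  let S' : AddSubgroup R :=
    { carrier := {x | ∃ W : Submodule (Subring.center R) R, W.FG ∧ ∀ r, x * r ∈ W}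
      zero_mem' := ⟨⊥, Submodule.fg_bot, by simp⟩
      add_mem' := by
        rintro x y ⟨W, hW, hx⟩ ⟨W', hW', hy⟩
        refine ⟨W ⊔ W', hW.sup hW', fun r => ?_⟩
        rw [add_mul]
        exact Submodule.add_mem_sup (hx r) (hy r)
      neg_mem' := by
        rintro x ⟨W, hW, hx⟩
        exact ⟨W, hW, fun r => by rw [neg_mul]; exact W.neg_mem (hx r)⟩ }
  obtain ⟨W', hW', hW'u⟩ : (1 : R) ∈ S' := by
    refine IsSimpleRing.mem_of_mul_mul_mem hu S'
      (fun p s => ⟨W.map (LinearMap.mulLeft _ p), hW.map _, fun r => ?_⟩) 1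
    exact ⟨u * (s * r) * 1, hWu _, by simp [mul_assoc]⟩
  have : W' = ⊤ := eq_top_iff.2 fun r _ => by simpa using hW'u r
  exact ⟨this ▸ hW'⟩

/-- A simple ring with a commutative nonzero corner is finite over its center. -/
theorem IsSimpleRing.finite_center_of_commute_corner {e : R} (he : e * e = e) (he0 : e ≠ 0)
    (h : ∀ x y, e * x * e * (e * y * e) = e * y * e * (e * x * e)) :
    Module.Finite (Subring.center R) R := by
  refine IsSimpleRing.finite_center_of_mul_mul_mem he0 he0
    (Submodule.fg_span_singleton e) fun r => Submodule.mem_span_singleton.2 ?_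
  obtain ⟨z, hz, hze⟩ := IsSimpleRing.exists_mem_center_mul_eq (c := e * r * e) he0
    (by rw [← mul_assoc, ← mul_assoc, he]) (by rw [mul_assoc, he]) (h r)
  exact ⟨⟨z, hz⟩, hze⟩

end IsSimpleRing

section LieIdeal

variable {R : Type*} [Ring R] [IsSimpleRing R] {e : R}

/-- If an additive subgroup `P` of the corner `e R e` of a simple ring is a noncommutative Lie ideal
of that corner, then every subring containing `P` contains `e R e`. -/
theorem corner_mem_of_lie_ideal_not_commute (P : AddSubgroup R)
    (hP : ∀ p ∈ P, e * p = p ∧ p * e = p)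
    (hLie : ∀ x, e * x = x → x * e = x → ∀ p ∈ P, x * p - p * x ∈ P)
    (he : e * e = e) (A : Subring R) (hPA : ∀ p ∈ P, p ∈ A) {p q : R} (hp : p ∈ P) (hq : q ∈ P)
    (hpq : p * q - q * p ≠ 0) (r : R) : e * r * e ∈ A := by
  have key : ∀ y x, e * y = y → y * e = y → e * x = x → x * e = x →
      y * (p * q - q * p) * x ∈ A := by
    intro y x hy hy' hx hx'
    have hcomm : ∀ u, e * u = u → u * e = u → (p * q - q * p) * u ∈ A := fun u hu hu' => by
      have h1 := hLie (q * u) (by rw [← mul_assoc, (hP q hq).1]) (by rw [mul_assoc, hu']) p hp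
      have h2 := hLie u hu hu' p hp
      have h3 : (p * q - q * p) * u = q * (u * p - p * u) - (q * u * p - p * (q * u)) := by
        noncomm_ring
      rw [h3]
      exact A.sub_mem (A.mul_mem (hPA q hq) (hPA _ h2)) (hPA _ h1)
    have h1 := hLie (q * x) (by rw [← mul_assoc, (hP q hq).1]) (by rw [mul_assoc, hx']) p hp
    have h2 := hLie x hx hx' p hp
    have h3 := hLie y hy hy' q hq
    have h4 := hLie y hy hy' _ h2
    have h5 := hLie y hy hy' _ h1
    have h6 := hcomm (x * y) (by rw [← mul_assoc, hx]) (by rw [mul_assoc, hy'])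
    have h7 : y * (p * q - q * p) * x = (p * q - q * p) * (x * y)
        + ((y * q - q * y) * (x * p - p * x)
          + q * (y * (x * p - p * x) - (x * p - p * x) * y)
          - (y * (q * x * p - p * (q * x)) - (q * x * p - p * (q * x)) * y)) := by
      noncomm_ring
    rw [h7]
    exact A.add_mem h6 (A.sub_mem (A.add_mem (A.mul_mem (hPA _ h3) (hPA _ h2))
      (A.mul_mem (hPA _ hq) (hPA _ h4))) (hPA _ h5))
  have hw : e * (p * q - q * p) = p * q - q * p := by
    rw [mul_sub, ← mul_assoc, ← mul_assoc, (hP p hp).1, (hP q hq).1]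
  have hw' : (p * q - q * p) * e = p * q - q * p := by
    rw [sub_mul, mul_assoc, mul_assoc, (hP p hp).2, (hP q hq).2]
  refine IsSimpleRing.mem_of_mul_mul_mem hpq
    (A.toAddSubgroup.comap ((AddMonoidHom.mulRight e).comp (AddMonoidHom.mulLeft e)))
    (fun u v => ?_) r
  have h := key (e * u * e) (e * v * e)
    (by simp only [← mul_assoc, he]) (by simp only [mul_assoc, he])
    (by simp only [← mul_assoc, he]) (by simp only [mul_assoc, he])
  have h' : e * u * e * (p * q - q * p) * (e * v * e) = e * (u * (p * q - q * p) * v) * e := by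
    calc _ = e * u * (e * (p * q - q * p) * e) * v * e := by noncomm_ring
      _ = _ := by rw [hw, hw']; noncomm_ring
  rw [h'] at h
  exact h

/-- In a corner of a simple ring without 2-torsion, an element whose inner derivation squares to
zero is central. -/
theorem commute_corner_of_commutator_commutator_eq_zero (h2 : ∀ r : R, r + r = 0 → r = 0) {u : R}
    (heu : e * u = u) (hue : u * e = u) (he : e * e = e)
    (h : ∀ x, e * x = x → x * e = x → u * (u * x - x * u) = (u * x - x * u) * u)
    (x : R) (hx : e * x = x) (hx' : x * e = x) : u * x = x * u := by
  have hmul : ∀ y z, e * y = y → y * e = y → e * z = z → z * e = z →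
      (u * y - y * u) * (u * z - z * u) = 0 := by
    intro y z hy hy' hz hz'
    apply h2
    have h1 := sub_eq_zero.2 (h (y * z) (by rw [← mul_assoc, hy]) (by rw [mul_assoc, hz']))
    have h3 := sub_eq_zero.2 (h y hy hy')
    have h4 := sub_eq_zero.2 (h z hz hz')
    calc _ = (u * (u * (y * z) - y * z * u) - (u * (y * z) - y * z * u) * u)
          - (u * (u * y - y * u) - (u * y - y * u) * u) * z
          - y * (u * (u * z - z * u) - (u * z - z * u) * u) := by noncomm_ring
      _ = 0 := by rw [h1, h3, h4]; simp
  by_contra hne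
  refine sub_ne_zero.2 hne (IsSimpleRing.eq_zero_of_forall_mul_mul_eq_zero (sub_ne_zero.2 hne)
    fun r => ?_)
  have hr : e * (e * r * e) = e * r * e := by simp only [← mul_assoc, he]
  have hr' : e * r * e * e = e * r * e := by simp only [mul_assoc, he]
  have h1 := hmul x (e * r * e * x) hx hx' (by rw [← mul_assoc, hr]) (by rw [mul_assoc, hx'])
  have h3 := hmul x (e * r * e) hx hx' hr hr'
  have hd : e * (u * x - x * u) = u * x - x * u := by
    rw [mul_sub, ← mul_assoc, ← mul_assoc, heu, hx]
  have hd' : (u * x - x * u) * e = u * x - x * u := by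
    rw [sub_mul, mul_assoc, mul_assoc, hue, hx']
  calc (u * x - x * u) * r * (u * x - x * u)
      = ((u * x - x * u) * e) * r * (e * (u * x - x * u)) := by rw [hd, hd']
    _ = (u * x - x * u) * (u * (e * r * e * x) - e * r * e * x * u)
        - (u * x - x * u) * (u * (e * r * e) - e * r * e * u) * x := by noncomm_ring
    _ = 0 := by rw [h1, h3]; simp

end LieIdeal

section SkewCorner

variable {F R : Type*} [Field F] [Ring R] [Algebra F R]

/-- The skew elements of the Peirce component `e R f`. -/
def skewCorner (st : R →ₗ[F] R) (e f : R) : AddSubgroup R where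
  carrier := {a | st a = -a ∧ e * a = a ∧ a * f = a}
  zero_mem' := by simp
  add_mem' := by
    rintro a b ⟨ha, ha', ha''⟩ ⟨hb, hb', hb''⟩
    refine ⟨?_, by rw [mul_add, ha', hb'], by rw [add_mul, ha'', hb'']⟩
    rw [map_add, ha, hb, neg_add]
  neg_mem' := by
    rintro a ⟨ha, ha', ha''⟩
    exact ⟨by rw [map_neg, ha], by rw [mul_neg, ha'], by rw [neg_mul, ha'']⟩

/-- The additive span of the products of a skew element of `e R f` and one of `f R e`. -/
def skewCornerMul (st : R →ₗ[F] R) (e f : R) : AddSubgroup R :=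
  AddSubgroup.closure {p | ∃ a ∈ skewCorner st e f, ∃ b ∈ skewCorner st f e, a * b = p}

variable {st : R →ₗ[F] R} {e f : R}

theorem mul_mem_skewCornerMul {a b : R} (ha : a ∈ skewCorner st e f)
    (hb : b ∈ skewCorner st f e) : a * b ∈ skewCornerMul st e f :=
  AddSubgroup.subset_closure ⟨a, ha, b, hb, rfl⟩

theorem skewCornerMul_corner {p : R} (hp : p ∈ skewCornerMul st e f) :
    e * p = p ∧ p * e = p := by
  induction hp using AddSubgroup.closure_induction with
  | mem p hp =>
    obtain ⟨a, ha, b, hb, rfl⟩ := hp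
    exact ⟨by rw [← mul_assoc, ha.2.1], by rw [mul_assoc, hb.2.2]⟩
  | zero => simp
  | add x y _ _ hx hy => exact ⟨by rw [mul_add, hx.1, hy.1], by rw [add_mul, hx.2, hy.2]⟩
  | neg x _ hx => exact ⟨by rw [mul_neg, hx.1], by rw [neg_mul, hx.2]⟩

theorem exists_mul_ne_zero_of_mem_skewCornerMul {p : R} (hp : p ∈ skewCornerMul st e f)
    (hp0 : p ≠ 0) : ∃ a ∈ skewCorner st e f, ∃ b ∈ skewCorner st f e, a * b ≠ 0 := by
  by_contra! h
  have hle : skewCornerMul st e f ≤ ⊥ := by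
    refine (AddSubgroup.closure_le _).2 ?_
    rintro _ ⟨a, ha, b, hb, rfl⟩
    exact h a ha b hb
  exact hp0 (hle hp)

theorem add_mem_skewCorner (hst_mul : ∀ a b : R, st (a * b) = st b * st a)
    (hst_inv : ∀ a : R, st (st a) = a) (hf : st e = f) {a x : R} (ha : a ∈ skewCorner st e f)
    (hx : e * x = x) : x * a + a * st x ∈ skewCorner st e f := by
  obtain ⟨ha, ha', ha''⟩ := ha
  refine ⟨?_, by rw [mul_add, ← mul_assoc, hx, ← mul_assoc, ha'], ?_⟩
  · rw [map_add, hst_mul, hst_mul, ha, hst_inv]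
    noncomm_ring
  · rw [add_mul, mul_assoc, ha'', mul_assoc, ← hf, ← hst_mul, hx]

theorem add_mem_skewCorner_left (hst_mul : ∀ a b : R, st (a * b) = st b * st a)
    (hst_inv : ∀ a : R, st (st a) = a) (hf : st e = f) {b x : R} (hb : b ∈ skewCorner st f e)
    (hx : x * e = x) : st x * b + b * x ∈ skewCorner st f e := by
  obtain ⟨hb, hb', hb''⟩ := hb
  refine ⟨?_, ?_, by rw [add_mul, mul_assoc, hb'', mul_assoc, hx]⟩
  · rw [map_add, hst_mul, hst_mul, hb, hst_inv]
    noncomm_ring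
  · rw [mul_add, ← mul_assoc, ← mul_assoc, hb', ← hf, ← hst_mul, hx]

theorem commutator_mem_skewCornerMul (hst_mul : ∀ a b : R, st (a * b) = st b * st a)
    (hst_inv : ∀ a : R, st (st a) = a) (hf : st e = f) {x : R} (hx : e * x = x) (hx' : x * e = x)
    {p : R} (hp : p ∈ skewCornerMul st e f) : x * p - p * x ∈ skewCornerMul st e f := by
  induction hp using AddSubgroup.closure_induction with
  | mem p hp =>
    obtain ⟨a, ha, b, hb, rfl⟩ := hp
    have h : x * (a * b) - a * b * x = (x * a + a * st x) * b - a * (st x * b + b * x) := by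
      noncomm_ring
    rw [h]
    exact AddSubgroup.sub_mem _
      (mul_mem_skewCornerMul (add_mem_skewCorner hst_mul hst_inv hf ha hx) hb)
      (mul_mem_skewCornerMul ha (add_mem_skewCorner_left hst_mul hst_inv hf hb hx'))
  | zero => simp
  | add y z _ _ hy hz =>
    have h : x * (y + z) - (y + z) * x = (x * y - y * x) + (x * z - z * x) := by noncomm_ring
    rw [h]
    exact AddSubgroup.add_mem _ hy hz
  | neg y _ hy =>
    have h : x * -y - -y * x = -(x * y - y * x) := by noncomm_ring
    rw [h]
    exact AddSubgroup.neg_mem _ hy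

variable [IsSimpleRing R]

theorem finite_center_of_skewCorner_eq_bot (hst_mul : ∀ a b : R, st (a * b) = st b * st a)
    (hst_inv : ∀ a : R, st (st a) = a) (hf : st e = f) (he : e * e = e) (he0 : e ≠ 0)
    (h : skewCorner st f e = ⊥) : Module.Finite (Subring.center R) R := by
  have hf0 : f ≠ 0 := by
    rintro rfl
    exact he0 (by rw [← hst_inv e, hf, map_zero])
  have hff : f * f = f := by rw [← hf, ← hst_mul, he]
  have hsf : st f = e := by rw [← hf, hst_inv]
  have hsymm : ∀ y, f * y = y → y * e = y → st y = y := fun y hy hy' => by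
    have hmem : y - st y ∈ skewCorner st f e := by
      refine ⟨by rw [map_sub, hst_inv, neg_sub], ?_, ?_⟩
      · rw [mul_sub, hy, ← hf, ← hst_mul, hy']
      · rw [sub_mul, hy', ← hsf, ← hst_mul, hy]
    rw [h, AddSubgroup.mem_bot, sub_eq_zero] at hmem
    exact hmem.symm
  have hmul : ∀ y x, f * y = y → y * e = y → x * e = x → y * x = st x * y := fun y x hy hy' hx => by
    rw [← hsymm (y * x) (by rw [← mul_assoc, hy]) (by rw [mul_assoc, hx]), hst_mul, hsymm y hy hy']
  refine IsSimpleRing.finite_center_of_commute_corner he he0 fun x y => ?_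
  have hx : e * (e * x * e) = e * x * e := by simp only [← mul_assoc, he]
  have hy : e * (e * y * e) = e * y * e := by simp only [← mul_assoc, he]
  have hx' : e * x * e * e = e * x * e := by simp only [mul_assoc, he]
  have hy' : e * y * e * e = e * y * e := by simp only [mul_assoc, he]
  generalize e * x * e = x at *
  generalize e * y * e = y at *
  by_contra hne
  refine hf0 (IsSimpleRing.eq_zero_of_forall_mul_mul_eq_zero (sub_ne_zero.2 hne) fun r => ?_)
  have hr : f * (f * r * e) = f * r * e := by simp only [← mul_assoc, hff]
  have hr' : f * r * e * e = f * r * e := by simp only [mul_assoc, he]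
  have h1 : f * r * e * (x * y) = f * r * e * (y * x) := by
    rw [hmul _ (y * x) hr hr' (by rw [mul_assoc, hx']), ← mul_assoc, hmul _ x hr hr' hx', mul_assoc,
      hmul _ y hr hr' hy', hst_mul, ← mul_assoc]
  calc f * r * (x * y - y * x) = f * r * ((e * x) * y - (e * y) * x) := by rw [hx, hy]
    _ = f * r * e * (x * y) - f * r * e * (y * x) := by noncomm_ring
    _ = 0 := by rw [h1, sub_self]

theorem finite_center_of_skewCorner_mul_eq_zero (hst_mul : ∀ a b : R, st (a * b) = st b * st a)
    (hst_inv : ∀ a : R, st (st a) = a) (hf : st e = f) (he : e * e = e) (he0 : e ≠ 0)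
    (h : ∀ a ∈ skewCorner st e f, ∀ b ∈ skewCorner st f e, a * b = 0) :
    Module.Finite (Subring.center R) R := by
  have hf0 : f ≠ 0 := by
    rintro rfl
    exact he0 (by rw [← hst_inv e, hf, map_zero])
  have hff : f * f = f := by rw [← hf, ← hst_mul, he]
  have hsf : st f = e := by rw [← hf, hst_inv]
  by_cases hY : skewCorner st f e = ⊥
  · exact finite_center_of_skewCorner_eq_bot hst_mul hst_inv hf he he0 hY
  obtain ⟨b, hb, hb0⟩ : ∃ b ∈ skewCorner st f e, b ≠ 0 := by
    rw [AddSubgroup.eq_bot_iff_forall] at hY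
    push Not at hY
    exact hY
  refine finite_center_of_skewCorner_eq_bot hst_mul hst_inv hsf hff hf0
    ((AddSubgroup.eq_bot_iff_forall _).2 fun a ha => ?_)
  refine IsSimpleRing.eq_zero_of_forall_mul_mul_eq_zero hb0 fun r => ?_
  have hr : f * r * f * f = f * r * f := by simp only [mul_assoc, hff]
  have h1 := h _ (add_mem_skewCorner_left hst_mul hst_inv hsf ha hr) b hb
  rw [add_mul, mul_assoc, h a ha b hb, mul_zero, zero_add] at h1
  calc a * r * b = (a * f) * r * (f * b) := by rw [ha.2.2, hb.2.1]
    _ = a * (f * r * f) * b := by noncomm_ring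
    _ = 0 := h1

theorem finite_center_of_skewCornerMul_central (hst_mul : ∀ a b : R, st (a * b) = st b * st a)
    (hst_inv : ∀ a : R, st (st a) = a) (hf : st e = f) (he : e * e = e) (he0 : e ≠ 0)
    (h : ∀ p ∈ skewCornerMul st e f, ∀ x, e * x = x → x * e = x → p * x = x * p) :
    Module.Finite (Subring.center R) R := by
  by_cases hzero : ∀ a ∈ skewCorner st e f, ∀ b ∈ skewCorner st f e, a * b = 0
  · exact finite_center_of_skewCorner_mul_eq_zero hst_mul hst_inv hf he he0 hzero
  push Not at hzero
  obtain ⟨a, ha, b, hb, hab⟩ := hzero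
  have hcentral : ∀ p ∈ skewCornerMul st e f, ∃ z : Subring.center R, z • e = p := by
    intro p hp
    obtain ⟨z, hz, hze⟩ := IsSimpleRing.exists_mem_center_mul_eq (c := p) he0
      (skewCornerMul_corner hp).1 (skewCornerMul_corner hp).2
      fun r => h p hp _ (by simp only [← mul_assoc, he]) (by simp only [mul_assoc, he])
    exact ⟨⟨z, hz⟩, hze⟩
  obtain ⟨ζ, hζ⟩ := hcentral _ (mul_mem_skewCornerMul ha hb)
  have ha0 : a ≠ 0 := by
    rintro rfl
    exact hab (zero_mul b)
  have hζ0 : ζ ≠ 0 := by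
    rintro rfl
    exact hab (by rw [← hζ, zero_smul])
  obtain ⟨η, hη⟩ := (IsSimpleRing.isField_center R).mul_inv_cancel hζ0
  have hba : b * a = ζ • f := by
    have h1 : b * a = f * st ζ := by
      have := congrArg st hζ
      rw [Subring.smul_def, smul_eq_mul, hst_mul, hst_mul, ha.1, hb.1, hf] at this
      simpa using this.symm
    have hcent : ∀ r, st ζ * r = r * st ζ := fun r => by
      rw [← hst_inv r, ← hst_mul, ← hst_mul, Subring.mem_center_iff.1 ζ.2]
    have h2 : (ζ : R) * a = st ζ * a := by
      calc (ζ : R) * a = (ζ • e) * a := by rw [Subring.smul_def, smul_eq_mul, mul_assoc, ha.2.1]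
        _ = a * f * st ζ := by rw [hζ, mul_assoc, h1, mul_assoc]
        _ = st ζ * a := by rw [ha.2.2, hcent]
    have h3 : (ζ : R) - st ζ = 0 := by
      refine IsSimpleRing.eq_zero_of_forall_mul_mul_eq_zero ha0 fun r => ?_
      rw [sub_mul, sub_mul, hcent, ← Subring.mem_center_iff.1 ζ.2, mul_assoc, h2, mul_assoc,
        sub_self]
    rw [h1, ← sub_eq_zero.1 h3, Subring.mem_center_iff.1 ζ.2, Subring.smul_def, smul_eq_mul]
  have htrace : ∀ x, e * x = x → x * e = x → ∃ τ : Subring.center R,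
      a * st x * b = τ • e - ζ • x := by
    intro x hx hx'
    obtain ⟨τ, hτ⟩ := hcentral _
      (mul_mem_skewCornerMul (add_mem_skewCorner hst_mul hst_inv hf ha hx) hb)
    refine ⟨τ, ?_⟩
    rw [hτ, add_mul, mul_assoc x, ← hζ, mul_smul_comm, hx']
    abel
  choose! τ hτ using htrace
  have hquad : ∀ x y, e * x = x → x * e = x → e * y = y → y * e = y →
      ∃ s c : Subring.center R, x * y + y * x = (η * τ x) • y + s • x + c • e := by
    intro x y hx hx' hy hy'
    have h1 : (τ y • e - ζ • y) * (τ x • e - ζ • x) = ζ • (τ (x * y) • e - ζ • (x * y)) := by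
      rw [← hτ x hx hx', ← hτ y hy hy',
        ← hτ (x * y) (by rw [← mul_assoc, hx]) (by rw [mul_assoc, hy'])]
      calc a * st y * b * (a * st x * b) = a * st y * (b * a) * st x * b := by noncomm_ring
        _ = ζ • (a * (st y * f) * st x * b) := by
          rw [hba]; simp only [mul_smul_comm, smul_mul_assoc, mul_assoc]
        _ = ζ • (a * st (x * y) * b) := by
          rw [← hf, ← hst_mul, hy, hst_mul x y]; simp only [mul_assoc]
    simp only [sub_mul, mul_sub, smul_mul_assoc, mul_smul_comm, he, hx, hy'] at h1
    refine ⟨η * τ y, η * τ (x * y) - η * η * τ x * τ y, ?_⟩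
    linear_combination (norm := module) (η * η) • h1 - ((ζ * η + 1) * hη) • (x * y + y * x)
      + (η * τ y * hη) • x + (η * τ x * hη) • y + (η * τ (x * y) * hη) • e
  by_cases hcomm : ∀ x y, e * x * e * (e * y * e) = e * y * e * (e * x * e)
  · exact IsSimpleRing.finite_center_of_commute_corner he he0 hcomm
  push Not at hcomm
  obtain ⟨z, x, hzx⟩ := hcomm
  have hx : e * (e * x * e) = e * x * e := by simp only [← mul_assoc, he]
  have hz : e * (e * z * e) = e * z * e := by simp only [← mul_assoc, he]
  have hx' : e * x * e * e = e * x * e := by simp only [mul_assoc, he]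
  have hz' : e * z * e * e = e * z * e := by simp only [mul_assoc, he]
  generalize e * x * e = x at *
  generalize e * z * e = z at *
  refine IsSimpleRing.finite_center_of_mul_mul_mem he0 (sub_ne_zero.2 hzx)
    (Submodule.fg_span (Set.toFinite {x, e, x * z, z})) fun r => ?_
  have hr : e * (e * r * e) = e * r * e := by simp only [← mul_assoc, he]
  have hr' : e * r * e * e = e * r * e := by simp only [mul_assoc, he]
  obtain ⟨s, c, hsc⟩ := hquad x (e * r * e) hx hx' hr hr'
  obtain ⟨s', c', hsc'⟩ := hquad x (e * r * e * z) hx hx' (by rw [← mul_assoc, hr])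
    (by rw [mul_assoc, hz'])
  have h1 : e * r * (z * x - x * z) = s' • x + c' • e - s • (x * z) - c • z := by
    calc e * r * (z * x - x * z) = e * r * ((e * z) * x - (e * x) * z) := by rw [hx, hz]
      _ = (x * (e * r * e * z) + e * r * e * z * x) - (x * (e * r * e) + e * r * e * x) * z := by
        noncomm_ring
      _ = _ := by
        rw [hsc, hsc']
        simp only [add_mul, smul_mul_assoc, hz]
        abel
  rw [h1]
  have hmem : ∀ v ∈ ({x, e, x * z, z} : Set R),
      v ∈ Submodule.span (Subring.center R) {x, e, x * z, z} := fun v hv => Submodule.subset_span hv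
  exact Submodule.sub_mem _ (Submodule.sub_mem _ (Submodule.add_mem _
    (Submodule.smul_mem _ _ (hmem x (by simp))) (Submodule.smul_mem _ _ (hmem e (by simp))))
    (Submodule.smul_mem _ _ (hmem _ (by simp)))) (Submodule.smul_mem _ _ (hmem z (by simp)))

end SkewCorner

/-- **Lemma 8.**  Let `R` be a simple unital `F`-algebra with involution and an
idempotent `e` with `e e* = e* e = 0` and `e + e* = 1`, and suppose `R` is not
finite-dimensional over its center.  Then `R` is generated as an `F`-algebra by
`(K ∩ eRe*) ∪ (K ∩ e*Re)`. -/
theorem simple_algebra_generated_by_skew_corners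
    (F : Type*) [Field F] (hchar : (2 : F) ≠ 0)
    (R : Type*) [Ring R] [Algebra F R] [IsSimpleRing R]
    (st : R →ₗ[F] R)
    (hst_mul : ∀ a b : R, st (a * b) = st b * st a)
    (hst_inv : ∀ a : R, st (st a) = a)
    (e : R) (he : e * e = e)
    (hee : e * st e = 0) (hee' : st e * e = 0)
    (hsum : e + st e = 1)
    (hinf : ¬ Module.Finite (Subring.center R) R) :
    Algebra.adjoin F
        ({a : R | st a = -a ∧ ∃ r : R, a = e * r * st e} ∪
          {a : R | st a = -a ∧ ∃ r : R, a = st e * r * e}) = ⊤ := by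
  obtain ⟨f, hf⟩ : ∃ f, st e = f := ⟨_, rfl⟩
  rw [hf] at hee hee' hsum ⊢
  set A := Algebra.adjoin F
    ({a : R | st a = -a ∧ ∃ r : R, a = e * r * f} ∪ {a : R | st a = -a ∧ ∃ r : R, a = f * r * e})
  have hsf : st f = e := by rw [← hf, hst_inv]
  have hst_one : st 1 = 1 := by rw [← hsum, map_add, hf, hsf, add_comm]
  have he0 : e ≠ 0 := by
    rintro rfl
    rw [map_zero] at hf
    rw [← hf, add_zero] at hsum
    exact zero_ne_one hsum
  have h2 : ∀ r : R, r + r = 0 → r = 0 := fun r hr => by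
    rw [← two_smul F r] at hr
    exact (smul_eq_zero.1 hr).resolve_left hchar
  have hX : ∀ a ∈ skewCorner st e f, a ∈ A := fun a ha =>
    Algebra.subset_adjoin (Or.inl ⟨ha.1, a, by rw [ha.2.1, ha.2.2]⟩)
  have hY : ∀ b ∈ skewCorner st f e, b ∈ A := fun b hb =>
    Algebra.subset_adjoin (Or.inr ⟨hb.1, b, by rw [hb.2.1, hb.2.2]⟩)
  have hPA : skewCornerMul st e f ≤ A.toSubring.toAddSubgroup := by
    refine (AddSubgroup.closure_le _).2 ?_
    rintro _ ⟨a, ha, b, hb, rfl⟩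
    exact A.mul_mem (hX a ha) (hY b hb)
  have hLie : ∀ x, e * x = x → x * e = x → ∀ p ∈ skewCornerMul st e f,
      x * p - p * x ∈ skewCornerMul st e f :=
    fun x hx hx' p hp => commutator_mem_skewCornerMul hst_mul hst_inv hf hx hx' hp
  obtain ⟨p, hp, q, hq, hpq⟩ : ∃ p ∈ skewCornerMul st e f, ∃ q ∈ skewCornerMul st e f,
      p * q ≠ q * p := by
    by_contra! hcomm
    refine hinf (finite_center_of_skewCornerMul_central hst_mul hst_inv hf he he0 fun p hp => ?_)
    refine commute_corner_of_commutator_commutator_eq_zero h2 (skewCornerMul_corner hp).1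
      (skewCornerMul_corner hp).2 he fun x hx hx' => hcomm p hp _ ?_
    rw [← neg_sub]
    exact AddSubgroup.neg_mem _ (hLie x hx hx' p hp)
  have heA : ∀ r, e * r * e ∈ A := corner_mem_of_lie_ideal_not_commute (skewCornerMul st e f)
    (fun p hp => skewCornerMul_corner hp) hLie he A.toSubring (fun p hp => hPA hp) hp hq
    (sub_ne_zero.2 hpq)
  have hstA : ∀ x ∈ A, st x ∈ A := fun x hx => by
    induction hx using Algebra.adjoin_induction with
    | mem x hx =>
      have : st x = -x := hx.elim (fun h => h.1) fun h => h.1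
      rw [this]
      exact A.neg_mem (Algebra.subset_adjoin hx)
    | algebraMap r =>
      rw [Algebra.algebraMap_eq_smul_one, map_smul, hst_one]
      exact A.smul_mem A.one_mem r
    | add x y _ _ hx hy => rw [map_add]; exact A.add_mem hx hy
    | mul x y _ _ hx hy => rw [hst_mul]; exact A.mul_mem hy hx
  have hfA : ∀ r, f * r * f ∈ A := fun r => by
    have := hstA _ (heA (st r))
    rwa [hst_mul, hst_mul, hst_inv, hf, ← mul_assoc] at this
  have hcorner : ∀ g h a : R, a ≠ 0 → a ∈ A → g * a = a → a * h = a → (∀ r, g * r * g ∈ A) →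
      (∀ r, h * r * h ∈ A) → ∀ r, g * r * h ∈ A := by
    intro g h a ha0 haA hga hah hg hh
    refine IsSimpleRing.mem_of_mul_mul_mem ha0 (A.toSubring.toAddSubgroup.comap
      ((AddMonoidHom.mulRight h).comp (AddMonoidHom.mulLeft g))) fun r s => ?_
    have h1 : g * (r * a * s) * h = g * r * g * a * (h * s * h) := by
      calc g * (r * a * s) * h = g * (r * (g * a * h) * s) * h := by rw [hga, hah]
        _ = _ := by noncomm_ring
    have h3 : g * (r * a * s) * h ∈ A := h1 ▸ A.mul_mem (A.mul_mem (hg r) haA) (hh s)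
    exact h3
  have hp0 : p ≠ 0 := by
    rintro rfl
    exact hpq (by simp)
  obtain ⟨a, ha, b, hb, hab⟩ := exists_mul_ne_zero_of_mem_skewCornerMul hp hp0
  refine Algebra.eq_top_iff.2 fun x => ?_
  have hx : x = e * x * e + e * x * f + (f * x * e + f * x * f) := by
    calc x = (e + f) * x * (e + f) := by rw [hsum]; simp
      _ = _ := by noncomm_ring
  rw [hx]
  exact A.add_mem
    (A.add_mem (heA x) (hcorner e f a (left_ne_zero_of_mul hab) (hX a ha) ha.2.1 ha.2.2 heA hfA x))
    (A.add_mem (hcorner f e b (right_ne_zero_of_mul hab) (hY b hb) hb.2.1 hb.2.2 hfA heA x) (hfA x))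
end

section
/- Let m ≥ 1 and let A = F⟨x₁,…,x_m⟩ be the free unital associative F-algebra on generators x₁,…,x_m. Let σ : A → A be an F-linear map satisfying σ(ab) = σ(b)σ(a) for all a,b ∈ A, σ(1) = 1, and σ(x_i) = −x_i for each i (such σ exists, is unique, and satisfies σ² = id), and let K = {a ∈ A : σ(a) = −a}. For each i and a₁,a₂,a₃ ∈ K define f(x_i,a₁) = x_i a₁ x_i, f(x_i,a₁,a₂) = f(x_i,a₁) a₂ f(x_i,a₁), and f(x_i,a₁,a₂,a₃) = f(x_i,a₁,a₂) a₃ f(x_i,a₁,a₂). Let I be the two-sided ideal of A generated by all elements f(x_i,a₁,a₂,a₃) with 1 ≤ i ≤ m and a₁,a₂,a₃ ∈ K. Then there exists a positive integer d such that every product x_{i₁} x_{i₂} ⋯ x_{i_d} of d generators lies in I. -/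
namespace TwoSidedIdeal

variable {R : Type*} [Ring R]

/-- Primeness of a two-sided ideal, stated on elements; the whole ring is not excluded. -/
def IsPrimeLike (P : TwoSidedIdeal R) : Prop :=
  ∀ a b : R, (∀ r, a * r * b ∈ P) → a ∈ P ∨ b ∈ P

/-- All products of `d` members of the family `x` lie in `I`, for some `d > 0`. -/
def NilpotentModulo {ι : Type*} (x : ι → R) (I : TwoSidedIdeal R) : Prop :=
  ∃ d : ℕ, 0 < d ∧ ∀ l : List ι, l.length = d → (l.map x).prod ∈ I

theorem mem_sSup_of_isChain {c : Set (TwoSidedIdeal R)} (hc : IsChain (· ≤ ·) c)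
    (hne : c.Nonempty) {x : R} (hx : x ∈ sSup c) : ∃ I ∈ c, x ∈ I := by
  let U : TwoSidedIdeal R := TwoSidedIdeal.mk' {x | ∃ I ∈ c, x ∈ I}
    (by obtain ⟨I, hI⟩ := hne; exact ⟨I, hI, I.zero_mem⟩)
    (by
      rintro x y ⟨I, hI, hx⟩ ⟨J, hJ, hy⟩
      rcases hc.total hI hJ with h | h
      · exact ⟨J, hJ, J.add_mem (h hx) hy⟩
      · exact ⟨I, hI, I.add_mem hx (h hy)⟩)
    (by rintro x ⟨I, hI, hx⟩; exact ⟨I, hI, I.neg_mem hx⟩)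
    (by rintro x y ⟨I, hI, hy⟩; exact ⟨I, hI, I.mul_mem_left _ _ hy⟩)
    (by rintro x y ⟨I, hI, hx⟩; exact ⟨I, hI, I.mul_mem_right _ _ hx⟩)
  have hU : sSup c ≤ U := sSup_le fun I hI y hy => by
    rw [TwoSidedIdeal.mem_mk']
    exact ⟨I, hI, hy⟩
  have hxU := hU hx
  rwa [TwoSidedIdeal.mem_mk'] at hxU

theorem exists_mem_forall_mem_of_isChain {c : Set (TwoSidedIdeal R)}
    (hc : IsChain (· ≤ ·) c) (hne : c.Nonempty) {s : Set R} (hs : s.Finite)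
    (h : ∀ x ∈ s, x ∈ sSup c) : ∃ I ∈ c, ∀ x ∈ s, x ∈ I := by
  induction s, hs using Set.Finite.induction_on with
  | empty => obtain ⟨I, hI⟩ := hne; exact ⟨I, hI, by simp⟩
  | @insert a s _ _ ih =>
    obtain ⟨I, hI, hsI⟩ := ih fun x hx => h x (Set.mem_insert_of_mem _ hx)
    obtain ⟨J, hJ, haJ⟩ := mem_sSup_of_isChain hc hne (h a (Set.mem_insert _ _))
    rcases hc.total hI hJ with hIJ | hJI
    · exact ⟨J, hJ, Set.forall_mem_insert.2 ⟨haJ, fun x hx => hIJ (hsI x hx)⟩⟩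
    · exact ⟨I, hI, Set.forall_mem_insert.2 ⟨hJI haJ, hsI⟩⟩

theorem mul_mem_of_mem_sup_span {P : TwoSidedIdeal R} {a b : R} (h : ∀ r, a * r * b ∈ P)
    {u v : R} (hu : u ∈ P ⊔ span {a}) (hv : v ∈ P ⊔ span {b}) : u * v ∈ P := by
  have left : ∀ s ∈ span {a}, ∀ r, s * r * b ∈ P := by
    intro s hs
    induction hs using span_induction with
    | mem x hx => rw [Set.mem_singleton_iff.1 hx]; exact h
    | zero => intro r; simp [P.zero_mem]
    | add x y _ _ hx hy => intro r; rw [add_mul, add_mul]; exact P.add_mem (hx r) (hy r)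
    | neg x _ hx => intro r; rw [neg_mul, neg_mul]; exact P.neg_mem (hx r)
    | left_absorb c x _ hx =>
      intro r; rw [mul_assoc, mul_assoc, ← mul_assoc x]; exact P.mul_mem_left _ _ (hx r)
    | right_absorb c x _ hx => intro r; rw [mul_assoc x]; exact hx _
  have both : ∀ t ∈ span {b}, ∀ s ∈ span {a}, s * t ∈ P := by
    intro t ht
    induction ht using span_induction with
    | mem x hx =>
      intro s hs; rw [Set.mem_singleton_iff.1 hx]; simpa using left s hs 1
    | zero => intro s _; simp [P.zero_mem]
    | add x y _ _ hx hy => intro s hs; rw [mul_add]; exact P.add_mem (hx s hs) (hy s hs)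
    | neg x _ hx => intro s hs; rw [mul_neg]; exact P.neg_mem (hx s hs)
    | left_absorb c x _ hx =>
      intro s hs; rw [← mul_assoc]; exact hx _ (mul_mem_right _ _ _ hs)
    | right_absorb c x _ hx =>
      intro s hs; rw [← mul_assoc]; exact P.mul_mem_right _ _ (hx s hs)
  obtain ⟨p, hp, s, hs, rfl⟩ := mem_sup.1 hu
  obtain ⟨q, hq, t, ht, rfl⟩ := mem_sup.1 hv
  rw [add_mul, mul_add s]
  exact P.add_mem (P.mul_mem_right _ _ hp)
    (P.add_mem (P.mul_mem_left _ _ hq) (both t ht s hs))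

/-- A finite family is nilpotent modulo `I` as soon as every prime ideal over `I` contains it. -/
theorem nilpotentModulo_of_forall_prime {ι : Type*} [Finite ι] (x : ι → R)
    (I : TwoSidedIdeal R) (h : ∀ P, I ≤ P → P.IsPrimeLike → ∀ i, x i ∈ P) :
    NilpotentModulo x I := by
  by_contra hI
  obtain ⟨P, hIP, hP⟩ := zorn_le_nonempty₀ {J : TwoSidedIdeal R | ¬ NilpotentModulo x J}
    (fun c hcs hc J hJ => by
      refine ⟨sSup c, ?_, fun _ => le_sSup⟩
      rintro ⟨d, hd, hw⟩
      have hfin : {l : List ι | l.length = d}.Finite := List.finite_length_eq ι d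
      obtain ⟨L, hL, hLw⟩ := exists_mem_forall_mem_of_isChain hc ⟨J, hJ⟩
        (hfin.image fun l => (l.map x).prod) (by rintro _ ⟨l, hl, rfl⟩; exact hw l hl)
      exact hcs hL ⟨d, hd, fun l hl => hLw _ ⟨l, hl, rfl⟩⟩) I hI
  have grow : ∀ a ∉ P, NilpotentModulo x (P ⊔ span {a}) := by
    intro a ha
    by_contra hn
    exact ha (hP.2 hn le_sup_left (mem_sup_right (subset_span rfl)))
  have prime : P.IsPrimeLike := by
    intro a b hab
    by_contra! hnot
    obtain ⟨d, hd, hdw⟩ := grow a hnot.1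
    obtain ⟨e, he, hew⟩ := grow b hnot.2
    refine hP.1 ⟨d + e, by omega, fun l hl => ?_⟩
    rw [← List.take_append_drop d l, List.map_append, List.prod_append]
    exact mul_mem_of_mem_sup_span hab (hdw _ (by simp; omega)) (hew _ (by simp; omega))
  refine hP.1 ⟨1, one_pos, fun l hl => ?_⟩
  obtain ⟨i, rfl⟩ := List.length_eq_one_iff.1 hl
  simpa using h P hIP prime i

/-- In a prime quotient, a skew element `x` with `x a x = 0` for all skew `a` vanishes. -/
theorem IsPrimeLike.mem_of_forall_skew [Invertible (2 : R)] {P : TwoSidedIdeal R}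
    (hP : P.IsPrimeLike) (σ : R →+ R) (hmul : ∀ a b, σ (a * b) = σ b * σ a)
    (hinv : ∀ a, σ (σ a) = a) {x : R} (hx : σ x = -x)
    (h : ∀ a, σ a = -a → x * a * x ∈ P) : x ∈ P := by
  have symm (a : R) : x * a * x - x * σ a * x ∈ P := by
    convert h (a - σ a) (by simp [hinv]) using 1
    noncomm_ring
  have anti (a b : R) : x * a * x * b * x + x * b * x * a * x ∈ P := by
    have e₁ := symm (a * x * b)
    have e₂ := P.mul_mem_right _ (σ a * x) (symm b)
    have e₃ := P.mul_mem_left (x * b) _ (symm a)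
    simp only [hmul, hx] at e₁
    convert P.add_mem (P.add_mem e₁ e₂) e₃ using 1
    noncomm_ring
  have triple (a b c : R) : x * a * x * b * x * c * x ∈ P := by
    have e₁ := anti (a * x * b) c
    have e₂ := P.mul_mem_right _ (b * x) (anti c a)
    have e₃ := P.mul_mem_left (x * a) _ (anti c b)
    convert P.mul_mem_left (⅟2) _ (P.add_mem (P.sub_mem e₁ e₂) e₃) using 1
    rw [eq_comm, invOf_mul_eq_iff_eq_mul_left]
    noncomm_ring
  by_contra hn
  have double (a b : R) : x * a * x * b * x ∈ P :=
    (hP _ x fun c => triple a b c).resolve_right hn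
  have single (a : R) : x * a * x ∈ P := (hP _ x fun b => double a b).resolve_right hn
  exact hn ((hP x x single).elim id id)

end TwoSidedIdeal

theorem FreeAlgebra.involutive_of_antihom {F X : Type*} [CommRing F]
    (σ : FreeAlgebra F X →ₗ[F] FreeAlgebra F X) (hmul : ∀ a b, σ (a * b) = σ b * σ a)
    (hone : σ 1 = 1) (hgen : ∀ i, σ (FreeAlgebra.ι F i) = -FreeAlgebra.ι F i)
    (a : FreeAlgebra F X) : σ (σ a) = a := by
  induction a using FreeAlgebra.induction with
  | grade0 r => simp [Algebra.algebraMap_eq_smul_one, hone]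
  | grade1 i => simp [hgen]
  | mul a b ha hb => rw [hmul, hmul, ha, hb]
  | add a b ha hb => rw [map_add, map_add, ha, hb]


/-- **Lemma 10.**  Let `A = F⟨x₁,…,x_m⟩` be the free unital associative `F`-algebra,
`σ` the involution with `σ(x_i) = -x_i`, and `K` the skew elements.  Let `I` be the
two-sided ideal generated by all `f(x_i,a₁,a₂,a₃)` with `a₁,a₂,a₃ ∈ K`, where
`f(x_i,a₁) = x_i a₁ x_i`, `f(x_i,a₁,a₂) = f(x_i,a₁) a₂ f(x_i,a₁)` and
`f(x_i,a₁,a₂,a₃) = f(x_i,a₁,a₂) a₃ f(x_i,a₁,a₂)`.  Then some power of the augmentation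
part vanishes mod `I`: there is `d > 0` such that every product of `d` generators lies
in `I`. -/
theorem free_algebra_quotient_nilpotent
    (F : Type*) [Field F] (hchar : (2 : F) ≠ 0)
    (m : ℕ) (hm : 1 ≤ m)
    (σ : FreeAlgebra F (Fin m) →ₗ[F] FreeAlgebra F (Fin m))
    (hσ_mul : ∀ a b : FreeAlgebra F (Fin m), σ (a * b) = σ b * σ a)
    (hσ_one : σ 1 = 1)
    (hσ_gen : ∀ i : Fin m, σ (FreeAlgebra.ι F i) = -FreeAlgebra.ι F i) :
    ∃ d : ℕ, 0 < d ∧ ∀ w : Fin d → Fin m,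
      (List.ofFn fun t : Fin d => FreeAlgebra.ι F (w t)).prod ∈
        TwoSidedIdeal.span
          {y : FreeAlgebra F (Fin m) | ∃ (i : Fin m) (a₁ a₂ a₃ : FreeAlgebra F (Fin m)),
            σ a₁ = -a₁ ∧ σ a₂ = -a₂ ∧ σ a₃ = -a₃ ∧
            y = ((FreeAlgebra.ι F i * a₁ * FreeAlgebra.ι F i) * a₂ *
                  (FreeAlgebra.ι F i * a₁ * FreeAlgebra.ι F i)) * a₃ *
                ((FreeAlgebra.ι F i * a₁ * FreeAlgebra.ι F i) * a₂ *
                  (FreeAlgebra.ι F i * a₁ * FreeAlgebra.ι F i))} := by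
  have hinv := FreeAlgebra.involutive_of_antihom σ hσ_mul hσ_one hσ_gen
  have : Invertible (2 : F) := invertibleOfNonzero hchar
  have : Invertible (2 : FreeAlgebra F (Fin m)) :=
    (Invertible.map (algebraMap F (FreeAlgebra F (Fin m))) (2 : F)).copy 2 (map_ofNat _ 2).symm
  have skew {x a : FreeAlgebra F (Fin m)} (hx : σ x = -x) (ha : σ a = -a) :
      σ (x * a * x) = -(x * a * x) := by
    rw [hσ_mul, hσ_mul, hx, ha]
    noncomm_ring
  obtain ⟨d, hd, hw⟩ := TwoSidedIdeal.nilpotentModulo_of_forall_prime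
    (fun i : Fin m => FreeAlgebra.ι F i)
    (TwoSidedIdeal.span
          {y : FreeAlgebra F (Fin m) | ∃ (i : Fin m) (a₁ a₂ a₃ : FreeAlgebra F (Fin m)),
            σ a₁ = -a₁ ∧ σ a₂ = -a₂ ∧ σ a₃ = -a₃ ∧
            y = ((FreeAlgebra.ι F i * a₁ * FreeAlgebra.ι F i) * a₂ *
                  (FreeAlgebra.ι F i * a₁ * FreeAlgebra.ι F i)) * a₃ *
                ((FreeAlgebra.ι F i * a₁ * FreeAlgebra.ι F i) * a₂ *
                  (FreeAlgebra.ι F i * a₁ * FreeAlgebra.ι F i))})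
    (fun P hIP hP i => by
      have descend {x : FreeAlgebra F (Fin m)} (hx : σ x = -x) :=
        hP.mem_of_forall_skew σ.toAddMonoidHom hσ_mul hinv hx
      refine descend (hσ_gen i) fun a₁ h₁ => ?_
      have k₁ := skew (hσ_gen i) h₁
      refine descend k₁ fun a₂ h₂ => ?_
      refine descend (skew k₁ h₂) fun a₃ h₃ => ?_
      exact hIP (TwoSidedIdeal.subset_span ⟨i, a₁, a₂, a₃, h₁, h₂, h₃, rfl⟩))
  refine ⟨d, hd, fun w => ?_⟩
  have hlist := hw (List.ofFn w) (by simp)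
  rwa [List.map_ofFn] at hlist
end
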